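/- arXiv:1110.6521 — 2 statements merged into one kernel-verified Lean document; each statement's English description precedes it below -/
import Mathlib

section
/- Let d ≥ 1 and let a : ℤ^d → ℂ be square-summable. Then Σ_{(l,s)∈ℤ^d×ℤ, l≠0} |b_u(l,s)|^{d+1} ≤ Σ_{r=0}^{d−1} T_{r,d}(u). -/
open scoped BigOperators
open Matrix

attribute [local instance] Classical.propDecidable

/-- The space-time Fourier coefficients of `|e^{itΔ}u|²`, where `a` are the Fourier
coefficients of `u`: `b_u(l,s) = Σ_{k : |k-l|²-|k|² = s} a_k conj(a_{k-l})`. -/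
noncomputable def bcoef {d : ℕ} (a : (Fin d → ℤ) → ℂ) (l : Fin d → ℤ) (s : ℤ) : ℂ :=
  ∑' k : Fin d → ℤ,
    if (k - l) ⬝ᵥ (k - l) - k ⬝ᵥ k = s then a k * (starRingEnd ℂ) (a (k - l)) else 0

/-- The lattice hyperplane `H_{(l,s)} = { j ∈ ℤ^d : 2 l·j = -s - |l|² }`. -/
def Hplane {d : ℕ} (l : Fin d → ℤ) (s : ℤ) : Set (Fin d → ℤ) :=
  {j | 2 * (l ⬝ᵥ j) = -s - l ⬝ᵥ l}

/-- The dimension of the affine variety spanned in `ℝ^d` by a set of lattice points: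
the dimension of the direction of their affine span. -/
noncomputable def spanDim {d : ℕ} (pts : Set (Fin d → ℤ)) : ℕ :=
  Module.finrank ℝ
    ((affineSpan ℝ ((fun (j : Fin d → ℤ) (i : Fin d) => (j i : ℝ)) '' pts)).direction)

/-- `T_{r,δ}(u) = Σ_{(l,s), l≠0} Σ_{(j₁,…,j_{δ+1}) ∈ H_{(l,s)}^{δ+1} ∩ 𝒱_r^δ}
Π_σ |a_{j_σ+l}| |a_{j_σ}|`. -/
noncomputable def Tsum (d δ r : ℕ) (a : (Fin d → ℤ) → ℂ) : ℝ :=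
  ∑' p : ((Fin d → ℤ) × ℤ) × (Fin (δ + 1) → (Fin d → ℤ)),
    if p.1.1 ≠ 0 ∧ (∀ σ, p.2 σ ∈ Hplane p.1.1 p.1.2) ∧ spanDim (Set.range p.2) = r
    then ∏ σ : Fin (δ + 1), ‖a (p.2 σ + p.1.1)‖ * ‖a (p.2 σ)‖ else 0

/-! Expanding `|b_u(l,s)|^(δ+1)` gives a sum over `(δ+1)`-tuples of points of `H_(l,s)`, and sorting
the tuples by the dimension of their span, which is less than `d`, gives the terms `T_{r,δ}`. The
point is that this sum converges. When `d ≤ δ`, the points `j_σ` of a tuple are affinely dependent,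
so some `j_{σ₀}` lies in the affine span of the others. By AM-GM the term of the tuple is at most
`∏ |a|²` over the tuple with `j_{σ₀}` replaced by `j_{σ₀} + l`, plus `∏ |a|²` over the
complementary tuple, which has the same form after the reflection `(l, s, j) ↦ (-l, -s, j + l)`.
The modified tuple determines `(l, s, j)`: if `(l', s', j')` gives the same one, then `j_{σ₀}` and
`j'_{σ₀}` both lie on `H_(l,s) ∩ H_(l',s')`, so their difference `l' - l` is orthogonal to itself.
Hence the sum is at most `2 (δ+1) ‖a‖₂^(2(δ+1))`. -/

theorem hasSum_prod_pi_of_nonneg {n : ℕ} {X : Fin n → Type*} {f : ∀ i, X i → ℝ} {c : Fin n → ℝ}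
    (hf : ∀ i x, 0 ≤ f i x) (h : ∀ i, HasSum (f i) (c i)) :
    HasSum (fun y : ∀ i, X i => ∏ i, f i (y i)) (∏ i, c i) := by
  induction n with
  | zero => simp
  | succ n ih =>
    have htail := ih (fun i => hf i.succ) (fun i => h i.succ)
    have hhead_nonneg : 0 ≤ f 0 := hf 0
    have htail_nonneg : 0 ≤ fun y : ∀ i : Fin n, X i.succ => ∏ i, f i.succ (y i) :=
      fun y => Finset.prod_nonneg fun i _ => hf i.succ (y i)
    have hsummable := (h 0).summable.mul_of_nonneg htail.summable hhead_nonneg htail_nonneg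
    have hmul := (h 0).mul htail hsummable
    rw [← (Fin.consEquiv X).hasSum_iff]
    simpa [Function.comp_def, Fin.consEquiv, Fin.prod_univ_succ] using hmul

theorem summable_indicator_comp_of_injOn {X Y E : Type*} [AddCommGroup E] [UniformSpace E]
    [IsUniformAddGroup E] [CompleteSpace E] {f : Y → E} (hf : Summable f) {g : X → Y} {S : Set X}
    (hg : Set.InjOn g S) : Summable (S.indicator (f ∘ g)) :=
  summable_subtype_iff_indicator.1 (hf.comp_injective hg.injective)

section Hyperplanes

variable {d : ℕ} {l x : Fin d → ℤ} {s : ℤ}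

theorem mem_Hplane_iff : x ∈ Hplane l s ↔ x ⬝ᵥ x - (x + l) ⬝ᵥ (x + l) = s := by
  simp only [Hplane, Set.mem_ofPred_eq, add_dotProduct, dotProduct_add, dotProduct_comm x l]
  omega

theorem add_mem_Hplane_neg_iff : x + l ∈ Hplane (-l) (-s) ↔ x ∈ Hplane l s := by
  rw [mem_Hplane_iff, mem_Hplane_iff, add_neg_cancel_right]
  omega

theorem add_mem_Hplane_iff {v : Fin d → ℤ} :
    x + v ∈ Hplane l s ↔ x ∈ Hplane l (s + 2 * (l ⬝ᵥ v)) := by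
  simp only [Hplane, Set.mem_ofPred_eq, dotProduct_add]
  omega

theorem sub_dotProduct_sub_eq_zero_of_mem_Hplane {l' x' : Fin d → ℤ} {s' : ℤ}
    (hx : x ∈ Hplane l s ∩ Hplane l' s') (hx' : x' ∈ Hplane l s ∩ Hplane l' s') :
    (l' - l) ⬝ᵥ (x - x') = 0 := by
  simp only [Hplane, Set.mem_inter_iff, Set.mem_ofPred_eq] at hx hx'
  rw [sub_dotProduct, dotProduct_sub, dotProduct_sub]
  omega

end Hyperplanes

section Span

variable {d : ℕ}

/-- The embedding `ℤ^d → ℝ^d`. -/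
def realPoint (x : Fin d → ℤ) : Fin d → ℝ := fun i => x i

theorem realPoint_dotProduct (x y : Fin d → ℤ) :
    realPoint x ⬝ᵥ realPoint y = ((x ⬝ᵥ y : ℤ) : ℝ) :=
  (RingHom.map_dotProduct (Int.castRingHom ℝ) x y).symm

theorem mem_Hplane_iff_realPoint {l x : Fin d → ℤ} {s : ℤ} :
    x ∈ Hplane l s ↔ 2 * (realPoint l ⬝ᵥ realPoint x) + s + realPoint l ⬝ᵥ realPoint l = 0 := by
  rw [realPoint_dotProduct, realPoint_dotProduct, Hplane, Set.mem_ofPred_eq, ← sub_eq_zero]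
  norm_cast
  exact Eq.congr_left (by ring)

theorem spanDim_eq_finrank_vectorSpan (S : Set (Fin d → ℤ)) :
    spanDim S = Module.finrank ℝ (vectorSpan ℝ (realPoint '' S)) := by
  rw [← direction_affineSpan]
  rfl

theorem spanDim_lt_of_subset_Hplane {l : Fin d → ℤ} {s : ℤ} (hl : l ≠ 0) {S : Set (Fin d → ℤ)}
    (hS : S ⊆ Hplane l s) : spanDim S < d := by
  let φ : Module.Dual ℝ (Fin d → ℝ) := dotProductBilin ℝ ℝ (realPoint l)
  have hφ : φ ≠ 0 := fun h => hl <| by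
    have hll : realPoint l ⬝ᵥ realPoint l = 0 := LinearMap.congr_fun h (realPoint l)
    rwa [realPoint_dotProduct, Int.cast_eq_zero, dotProduct_self_eq_zero] at hll
  have hspan : vectorSpan ℝ (realPoint '' S) ≤ LinearMap.ker φ := by
    rw [vectorSpan_def, Submodule.span_le]
    rintro _ ⟨_, ⟨x, hx, rfl⟩, _, ⟨y, hy, rfl⟩, rfl⟩
    have hxl := mem_Hplane_iff_realPoint.1 (hS hx)
    have hyl := mem_Hplane_iff_realPoint.1 (hS hy)
    change realPoint l ⬝ᵥ (realPoint x - realPoint y) = 0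
    rw [dotProduct_sub]
    linarith
  calc spanDim S < Module.finrank ℝ (LinearMap.ker φ) + 1 := by
        rw [spanDim_eq_finrank_vectorSpan]
        exact Nat.lt_succ_of_le (Submodule.finrank_mono hspan)
    _ = d := by rw [Module.Dual.finrank_ker_add_one_of_ne_zero hφ, Module.finrank_fin_fun]

/-- The point `j σ₀` of a tuple depends affinely on the other points, expressed as: it lies on every
lattice hyperplane containing the others. The degenerate cases `l = 0` of `Hplane l s`, namely `∅`
and the whole lattice, are allowed. -/
def IsRedundant {ι : Type*} (j : ι → Fin d → ℤ) (σ₀ : ι) : Prop :=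
  ∀ l s, (∀ σ ≠ σ₀, j σ ∈ Hplane l s) → j σ₀ ∈ Hplane l s

theorem IsRedundant.add_const {ι : Type*} {j : ι → Fin d → ℤ} {σ₀ : ι} (h : IsRedundant j σ₀)
    (v : Fin d → ℤ) : IsRedundant (fun σ => j σ + v) σ₀ := by
  intro l s
  simp only [add_mem_Hplane_iff]
  exact h l _

theorem exists_isRedundant {ι : Type*} [Fintype ι] {j : ι → Fin d → ℤ}
    (h : spanDim (Set.range j) + 1 < Fintype.card ι) : ∃ σ₀, IsRedundant j σ₀ := by
  have hdep : ¬ AffineIndependent ℝ (realPoint ∘ j) := fun hind => by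
    have : Nonempty ι := Fintype.card_pos_iff.1 (by omega)
    have hcard := hind.finrank_vectorSpan_add_one
    rw [Set.range_comp, ← spanDim_eq_finrank_vectorSpan] at hcard
    omega
  simp only [affineIndependent_iff, not_forall] at hdep
  obtain ⟨t, g, hg, hgj, σ₀, hσ₀, hgσ₀⟩ := hdep
  refine ⟨σ₀, fun l s hothers => mem_Hplane_iff_realPoint.2 ?_⟩
  let F : ι → ℝ := fun σ =>
    2 * (realPoint l ⬝ᵥ realPoint (j σ)) + s + realPoint l ⬝ᵥ realPoint l
  have hsum : ∑ σ ∈ t, g σ * F σ = 0 := calc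
    ∑ σ ∈ t, g σ * F σ = 2 * (realPoint l ⬝ᵥ ∑ σ ∈ t, g σ • (realPoint ∘ j) σ)
        + (∑ σ ∈ t, g σ) * (s + realPoint l ⬝ᵥ realPoint l) := by
      simp only [dotProduct_sum, dotProduct_smul, Finset.mul_sum, Finset.sum_mul,
        ← Finset.sum_add_distrib, smul_eq_mul, Function.comp_apply, F]
      exact Finset.sum_congr rfl fun σ _ => by ring
    _ = 0 := by rw [hg, hgj, dotProduct_zero, mul_zero, zero_mul, add_zero]
  rw [Finset.sum_eq_single_of_mem σ₀ hσ₀ fun σ _ hσ => by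
    rw [show F σ = 0 from mem_Hplane_iff_realPoint.1 (hothers σ hσ), mul_zero]] at hsum
  exact (mul_eq_zero.1 hsum).resolve_left hgσ₀

end Span

section Configurations

/-- The index set of the sums `T_{r,δ}`: a pair `(l, s)` together with a tuple `j` of lattice points
indexed by `ι`. -/
abbrev Config (d : ℕ) (ι : Type*) := ((Fin d → ℤ) × ℤ) × (ι → Fin d → ℤ)

variable {d : ℕ} {ι : Type*}

/-- The reflection `(l, s, j) ↦ (-l, -s, j + l)`, which exchanges `j_σ` and `j_σ + l`. -/
def reflect (p : Config d ι) : Config d ι :=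
  ((-p.1.1, -p.1.2), fun σ => p.2 σ + p.1.1)

theorem reflect_involutive : Function.Involutive (reflect (d := d) (ι := ι)) := by
  rintro ⟨⟨l, s⟩, j⟩
  simp [reflect]

/-- The configurations `(l, s, j)` with all `j_σ` on `H_(l,s)` and with `j_{σ₀}` redundant. -/
def redundantConfigs (d : ℕ) (σ₀ : ι) : Set (Config d ι) :=
  {p | (∀ σ, p.2 σ ∈ Hplane p.1.1 p.1.2) ∧ IsRedundant p.2 σ₀}

theorem reflect_mem_redundantConfigs {σ₀ : ι} {p : Config d ι} (hp : p ∈ redundantConfigs d σ₀) :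
    reflect p ∈ redundantConfigs d σ₀ :=
  ⟨fun σ => add_mem_Hplane_neg_iff.2 (hp.1 σ), hp.2.add_const _⟩

variable [DecidableEq ι]

/-- The tuple `j` of a configuration `(l, s, j)` with `j_{σ₀}` replaced by `j_{σ₀} + l`. -/
def shiftAt (σ₀ : ι) (p : Config d ι) : ι → Fin d → ℤ :=
  Function.update p.2 σ₀ (p.2 σ₀ + p.1.1)

theorem injOn_shiftAt (σ₀ : ι) : Set.InjOn (shiftAt σ₀) (redundantConfigs d σ₀) := by
  rintro ⟨⟨l, s⟩, j⟩ ⟨hH, hred⟩ ⟨⟨l', s'⟩, j'⟩ ⟨hH', hred'⟩ heq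
  dsimp only at hH hred hH' hred'
  have hne : ∀ σ ≠ σ₀, j σ = j' σ := fun σ hσ => by simpa [shiftAt, hσ] using congrFun heq σ
  have hσ₀ : j σ₀ + l = j' σ₀ + l' := by simpa [shiftAt] using congrFun heq σ₀
  have hl : l' = l := by
    have hj : j σ₀ ∈ Hplane l s ∩ Hplane l' s' :=
      ⟨hH σ₀, hred l' s' fun σ hσ => hne σ hσ ▸ hH' σ⟩
    have hj' : j' σ₀ ∈ Hplane l s ∩ Hplane l' s' :=
      ⟨hred' l s fun σ hσ => hne σ hσ ▸ hH σ, hH' σ₀⟩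
    have hdiff : j σ₀ - j' σ₀ = l' - l := by
      rw [sub_eq_sub_iff_add_eq_add, hσ₀, add_comm]
    have horth := sub_dotProduct_sub_eq_zero_of_mem_Hplane hj hj'
    rw [hdiff] at horth
    exact sub_eq_zero.1 (dotProduct_self_eq_zero.1 horth)
  subst hl
  have hjj' : j = j' := funext fun σ =>
    if hσ : σ = σ₀ then hσ ▸ add_right_cancel hσ₀ else hne σ hσ
  subst hjj'
  have hs : s = s' := (mem_Hplane_iff.1 (hH σ₀)).symm.trans (mem_Hplane_iff.1 (hH' σ₀))
  rw [hs]

end Configurations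

section Weights

variable {d : ℕ} (a : (Fin d → ℤ) → ℂ)

/-- The term `|a_{j+l}| |a_j|` of the sum over `j ∈ H_(l,s)` that bounds `|b_u(l,s)|`, extended by
zero off `H_(l,s)`. -/
noncomputable def pairWeight (l : Fin d → ℤ) (s : ℤ) (j : Fin d → ℤ) : ℝ :=
  if j ∈ Hplane l s then ‖a (j + l)‖ * ‖a j‖ else 0

theorem pairWeight_nonneg (l : Fin d → ℤ) (s : ℤ) (j : Fin d → ℤ) : 0 ≤ pairWeight a l s j := by
  unfold pairWeight
  positivity

variable {a} in
theorem summable_pairWeight (ha : Summable fun k => ‖a k‖ ^ 2) (l : Fin d → ℤ) (s : ℤ) :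
    Summable (pairWeight a l s) := by
  have hshift : Summable fun k => ‖a (k + l)‖ ^ 2 := ha.comp_injective (add_left_injective l)
  refine .of_nonneg_of_le (pairWeight_nonneg a l s) (fun j => ?_) (hshift.add ha)
  unfold pairWeight
  split_ifs
  · nlinarith [two_mul_le_add_sq ‖a (j + l)‖ ‖a j‖, sq_nonneg ‖a (j + l)‖, sq_nonneg ‖a j‖]
  · positivity

variable {a} in
theorem norm_bcoef_le_tsum_pairWeight (ha : Summable fun k => ‖a k‖ ^ 2) (l : Fin d → ℤ) (s : ℤ) :
    ‖bcoef a l s‖ ≤ ∑' j, pairWeight a l s j := by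
  unfold bcoef
  rw [← (Equiv.addRight l).tsum_eq]
  refine tsum_of_norm_bounded (summable_pairWeight ha l s).hasSum fun j => ?_
  simp only [Equiv.coe_addRight, add_sub_cancel_right, ← mem_Hplane_iff, pairWeight]
  split_ifs <;> simp

/-- The term of `(l, s, j)` in `∑_{l ≠ 0} (∑_{k ∈ H_(l,s)} |a_{k+l}| |a_k|)^n`, expanded over
tuples `j` with `n = |ι|` entries. For `n = δ + 1` it is the term of `(l, s, j)` in `T_{r,δ}`,
without the condition on the dimension `r`. -/
noncomputable def configWeight {ι : Type*} [Fintype ι] (p : Config d ι) : ℝ :=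
  if p.1.1 ≠ 0 then ∏ σ, pairWeight a p.1.1 p.1.2 (p.2 σ) else 0

section Majorant

variable {ι : Type*} [Fintype ι]

theorem configWeight_nonneg (p : Config d ι) : 0 ≤ configWeight a p := by
  have := Finset.prod_nonneg fun σ (_ : σ ∈ Finset.univ) =>
    pairWeight_nonneg a p.1.1 p.1.2 (p.2 σ)
  unfold configWeight
  positivity

theorem configWeight_eq_ite (p : Config d ι) :
    configWeight a p =
      if p.1.1 ≠ 0 ∧ ∀ σ, p.2 σ ∈ Hplane p.1.1 p.1.2 then
        ∏ σ, ‖a (p.2 σ + p.1.1)‖ * ‖a (p.2 σ)‖ else 0 := by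
  simp only [configWeight, pairWeight, Fintype.prod_ite_zero, ite_and]

variable [DecidableEq ι]

/-- The majorant `∏_{σ ≠ σ₀} |a_{j_σ}|² · |a_{j_{σ₀} + l}|²` of the sum over configurations with
`j_{σ₀}` redundant. -/
noncomputable def majorant (σ₀ : ι) : Config d ι → ℝ :=
  (redundantConfigs d σ₀).indicator ((fun y => ∏ σ, ‖a (y σ)‖ ^ 2) ∘ shiftAt σ₀)

theorem majorant_nonneg (σ₀ : ι) (p : Config d ι) : 0 ≤ majorant a σ₀ p :=
  Set.indicator_nonneg (fun _ _ => Finset.prod_nonneg fun _ _ => by positivity) p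

theorem prod_norm_add_mul_norm_eq (σ₀ : ι) (p : Config d ι) :
    ∏ σ, ‖a (p.2 σ + p.1.1)‖ * ‖a (p.2 σ)‖ =
      (∏ σ, ‖a (shiftAt σ₀ p σ)‖) * ∏ σ, ‖a (shiftAt σ₀ (reflect p) σ)‖ := by
  rw [← Finset.prod_mul_distrib]
  refine Finset.prod_congr rfl fun σ _ => ?_
  rcases eq_or_ne σ σ₀ with rfl | hσ
  · simp [shiftAt, reflect]
  · simp [shiftAt, reflect, hσ, mul_comm]

variable {a} in
theorem prod_norm_add_mul_norm_le_majorant {σ₀ : ι} {p : Config d ι}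
    (hp : p ∈ redundantConfigs d σ₀) :
    ∏ σ, ‖a (p.2 σ + p.1.1)‖ * ‖a (p.2 σ)‖ ≤ majorant a σ₀ p + majorant a σ₀ (reflect p) := by
  rw [majorant, Set.indicator_of_mem hp, Set.indicator_of_mem (reflect_mem_redundantConfigs hp),
    Function.comp_apply, Function.comp_apply, Finset.prod_pow, Finset.prod_pow,
    prod_norm_add_mul_norm_eq a σ₀]
  set A := ∏ σ, ‖a (shiftAt σ₀ p σ)‖
  set B := ∏ σ, ‖a (shiftAt σ₀ (reflect p) σ)‖
  nlinarith [two_mul_le_add_sq A B, sq_nonneg A, sq_nonneg B]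

theorem configWeight_le_sum_majorant (hι : d < Fintype.card ι) (p : Config d ι) :
    configWeight a p ≤ ∑ σ₀, (majorant a σ₀ p + majorant a σ₀ (reflect p)) := by
  have hnonneg : ∀ σ₀, 0 ≤ majorant a σ₀ p + majorant a σ₀ (reflect p) := fun σ₀ =>
    add_nonneg (majorant_nonneg a σ₀ p) (majorant_nonneg a σ₀ (reflect p))
  rw [configWeight_eq_ite]
  split_ifs with hp
  · obtain ⟨hl, hH⟩ := hp
    have hdim := spanDim_lt_of_subset_Hplane hl (Set.range_subset_iff.2 hH)
    obtain ⟨σ₀, hσ₀⟩ := exists_isRedundant (hι.trans_le' hdim)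
    exact (prod_norm_add_mul_norm_le_majorant ⟨hH, hσ₀⟩).trans <|
      Finset.single_le_sum (fun σ _ => hnonneg σ) (Finset.mem_univ σ₀)
  · exact Finset.sum_nonneg fun σ _ => hnonneg σ

end Majorant

variable {a} (ha : Summable fun k => ‖a k‖ ^ 2)
include ha

theorem summable_majorant {n : ℕ} (σ₀ : Fin n) : Summable (majorant a σ₀) :=
  summable_indicator_comp_of_injOn
    (hasSum_prod_pi_of_nonneg (fun _ _ => by positivity) fun _ => ha.hasSum).summable
    (injOn_shiftAt σ₀)

theorem summable_configWeight {n : ℕ} (hn : d < n) :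
    Summable (configWeight a : Config d (Fin n) → ℝ) :=
  .of_nonneg_of_le (configWeight_nonneg a)
    (configWeight_le_sum_majorant a (by rwa [Fintype.card_fin])) <|
    summable_sum fun σ₀ _ => (summable_majorant ha σ₀).add <|
      (summable_majorant ha σ₀).comp_injective reflect_involutive.injective

theorem hasSum_configWeight_fiber (n : ℕ) (ls : (Fin d → ℤ) × ℤ) :
    HasSum (fun j : Fin n → Fin d → ℤ => configWeight a (ls, j))
      (if ls.1 ≠ 0 then (∑' j, pairWeight a ls.1 ls.2 j) ^ n else 0) := by
  by_cases hl : ls.1 ≠ 0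
  · simpa [configWeight, hl] using hasSum_prod_pi_of_nonneg (n := n)
      (fun _ => pairWeight_nonneg a ls.1 ls.2)
      (fun _ => (summable_pairWeight ha ls.1 ls.2).hasSum)
  · simp [configWeight, hl]

theorem sum_Tsum_eq_tsum_configWeight {δ : ℕ} (hδ : d ≤ δ) :
    ∑ r ∈ Finset.range d, Tsum d δ r a =
      ∑' p : Config d (Fin (δ + 1)), configWeight a p := by
  have hT : ∀ r, Tsum d δ r a = ∑' p : Config d (Fin (δ + 1)),
      {p : Config d (Fin (δ + 1)) | spanDim (Set.range p.2) = r}.indicator (configWeight a) p := by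
    intro r
    refine tsum_congr fun p => ?_
    by_cases hr : spanDim (Set.range p.2) = r <;> simp [hr, configWeight_eq_ite]
  simp only [hT]
  rw [← Summable.tsum_finsetSum fun r _ =>
    (summable_configWeight ha (Nat.lt_succ_of_le hδ)).indicator _]
  refine tsum_congr fun p => ?_
  simp only [Set.indicator_apply, Set.mem_ofPred_eq, Finset.sum_ite_eq, Finset.mem_range,
    ite_eq_left_iff]
  intro hdim
  rw [configWeight_eq_ite, if_neg]
  exact fun hp => hdim (spanDim_lt_of_subset_Hplane hp.1 (Set.range_subset_iff.2 hp.2))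

end Weights

theorem tsum_bcoef_pow_le_sum_Tsum_general {d δ : ℕ} (hδ : d ≤ δ) (a : (Fin d → ℤ) → ℂ)
    (ha : Summable fun k : Fin d → ℤ => ‖a k‖ ^ 2) :
    (Summable fun ls : (Fin d → ℤ) × ℤ =>
        if ls.1 ≠ 0 then ‖bcoef a ls.1 ls.2‖ ^ (δ + 1) else 0) ∧
      (∑' ls : (Fin d → ℤ) × ℤ,
          if ls.1 ≠ 0 then ‖bcoef a ls.1 ls.2‖ ^ (δ + 1) else 0) ≤
        ∑ r ∈ Finset.range d, Tsum d δ r a := by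
  have hfib := (summable_configWeight ha (Nat.lt_succ_of_le hδ)).hasSum.prod_fiberwise
    (hasSum_configWeight_fiber ha (δ + 1))
  have hle : ∀ ls : (Fin d → ℤ) × ℤ,
      (if ls.1 ≠ 0 then ‖bcoef a ls.1 ls.2‖ ^ (δ + 1) else 0) ≤
        if ls.1 ≠ 0 then (∑' j, pairWeight a ls.1 ls.2 j) ^ (δ + 1) else 0 := fun ls => by
    split_ifs
    · exact pow_le_pow_left₀ (norm_nonneg _) (norm_bcoef_le_tsum_pairWeight ha _ _) _
    · exact le_rfl
  have hsummable := Summable.of_nonneg_of_le (fun ls => by positivity) hle hfib.summable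
  refine ⟨hsummable, ?_⟩
  rw [sum_Tsum_eq_tsum_configWeight ha hδ, ← hfib.tsum_eq]
  exact hsummable.tsum_le_tsum hle hfib.summable

/-- `Σ_{(l,s), l≠0} |b_u(l,s)|^{d+1} ≤ Σ_{r=0}^{d-1} T_{r,d}(u)`. -/
theorem tsum_bcoef_pow_le_sum_Tsum (d : ℕ) (hd : 1 ≤ d) (a : (Fin d → ℤ) → ℂ)
    (ha : Summable fun k : Fin d → ℤ => ‖a k‖ ^ 2) :
    (Summable fun ls : (Fin d → ℤ) × ℤ =>
        if ls.1 ≠ 0 then ‖bcoef a ls.1 ls.2‖ ^ (d + 1) else 0) ∧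
      (∑' ls : (Fin d → ℤ) × ℤ,
          if ls.1 ≠ 0 then ‖bcoef a ls.1 ls.2‖ ^ (d + 1) else 0) ≤
        ∑ r ∈ Finset.range d, Tsum d d r a :=
  tsum_bcoef_pow_le_sum_Tsum_general le_rfl a ha
end

section
/- Let d ≥ 1 and let Λ ⊆ ℤ^d be a submodule of rank δ ≥ 1. Let (λ_n)_{n∈ℕ} be nonnegative reals with Σ_n λ_n < ∞, and for each n let a^n : ℤ^d → ℂ satisfy a^n_k = 0 for k ∉ Λ and Σ_{k∈ℤ^d} |a^n_k|² = 1 (i.e. the corresponding functions u_n ∈ L²(𝕋^d) have unit norm and Fourier support in Λ; for instance the eigenfunctions of a density matrix ρ ∈ ℒ₊¹(Λ)). Set b_ρ(l,s) := Σ_{n∈ℕ} λ_n · b_{u_n}(l,s) for (l,s) ∈ ℤ^d × ℤ. Then ( Σ_{(l,s)∈ℤ^d×ℤ} |b_ρ(l,s)|^{δ+1} )^{1/(δ+1)} ≤ 2^{δ/(δ+1)} · Σ_{n∈ℕ} λ_n. In particular there is a constant C_δ > 0, depending only on δ = rk Λ, such that ‖b_ρ‖_{ℓ^{δ+1}(ℤ^{d+1})}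 ≤ C_δ Σ_n λ_n. -/
open scoped BigOperators
open Matrix

/-! Expanding the `(δ+1)`-st power bounds `‖b_ρ‖^{δ+1}` by sums of `∏ᵢ |a_{kᵢ}| |a_{kᵢ-l}|` over
tuples `(l, s, k₀, …, k_δ)` for which every edge `{kᵢ, kᵢ - l}` satisfies `|kᵢ - l|² - |kᵢ|² = s`.
This condition makes the increments `kⱼ - k₀` orthogonal to `l`. Let `S` index a maximal independent
subfamily of the increments. Keep the endpoint `kⱼ` for `j ∈ S ∪ {0}` and `kⱼ - l` for the other
`j`. Then `S` and the kept endpoints determine the tuple: if some `j` is not in `S`, then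
`kⱼ - l - k₀` is known and equals `-l` modulo the span of the independent increments, to which
`l` is orthogonal; if `S` contains every `j`, then `l = 0`, since `Λ` has no room for another
independent vector. Exchanging the endpoints `k ↔ k - l` preserves the increments, so the
discarded endpoints determine the tuple as well. Hence `2XY ≤ X² + Y²`, with `X` and `Y` the
products over the kept and the discarded endpoints, bounds each sum by `2^δ ∏ᵢ ‖aᵢ‖²`, where
`2^δ` counts the sets `S`. -/

open scoped ENNReal
open Submodule QuadraticMap ComplexConjugate

theorem prod_tsum_eq_tsum_prod {n : ℕ} {α : Fin n → Type*} (f : ∀ i, α i → ℝ≥0∞) :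
    ∏ i, ∑' x, f i x = ∑' x : ∀ i, α i, ∏ i, f i (x i) := by
  induction n with
  | zero => simp
  | succ n ih =>
    rw [Fin.prod_univ_succ, ih, ← (Fin.consEquiv α).tsum_eq, ENNReal.tsum_prod']
    simp only [Fin.consEquiv, Equiv.coe_fn_mk, Fin.prod_univ_succ, Fin.cons_zero, Fin.cons_succ,
      ENNReal.tsum_mul_left, ENNReal.tsum_mul_right]

theorem tsum_sq_prod_le_card_mul {τ σ α : Type*} [Fintype σ] {m : ℕ} {f : τ → σ × (Fin m → α)}
    (hf : f.Injective) (g : Fin m → α → ℝ≥0∞) :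
    ∑' t, (∏ i, g i ((f t).2 i)) ^ 2 ≤ Fintype.card σ * ∏ i, ∑' x, g i x ^ 2 :=
  calc ∑' t, (∏ i, g i ((f t).2 i)) ^ 2
      ≤ ∑' p : σ × (Fin m → α), (∏ i, g i (p.2 i)) ^ 2 :=
        ENNReal.tsum_comp_le_tsum_of_injective hf fun p => (∏ i, g i (p.2 i)) ^ 2
    _ = Fintype.card σ * ∏ i, ∑' x, g i x ^ 2 := by
        simp only [ENNReal.tsum_prod', ← Finset.prod_pow, prod_tsum_eq_tsum_prod, tsum_fintype,
          Finset.sum_const, Finset.card_univ, nsmul_eq_mul]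

theorem two_mul_mul_le_sq_add_sq {α : Type*} [CommSemiring α] [LinearOrder α]
    [CanonicallyOrderedAdd α] (x y : α) : 2 * (x * y) ≤ x ^ 2 + y ^ 2 := by
  wlog hxy : x ≤ y generalizing x y
  · simpa only [mul_comm x, add_comm (x ^ 2)] using this y x (le_of_not_ge hxy)
  obtain ⟨e, rfl⟩ := exists_add_of_le hxy
  exact le_iff_exists_add.2 ⟨e ^ 2, by ring⟩

theorem summable_and_rpow_tsum_le_of_tsum_enorm_pow_le {α E : Type*} [SeminormedAddGroup E]
    {f : α → E} {p : ℕ} (hp : p ≠ 0) {C : ℝ} (hC : 0 ≤ C)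
    (h : ∑' x, ‖f x‖ₑ ^ p ≤ ENNReal.ofReal C ^ p) :
    (Summable fun x => ‖f x‖ ^ p) ∧ (∑' x, ‖f x‖ ^ p) ^ (1 / p : ℝ) ≤ C := by
  have hreal : ∀ x, ‖f x‖ₑ ^ p = ENNReal.ofReal (‖f x‖ ^ p) := fun x => by
    rw [ENNReal.ofReal_pow (norm_nonneg _), ofReal_norm]
  have hsum : Summable fun x => ‖f x‖ ^ p := by
    simpa using ENNReal.summable_toReal (ne_top_of_le_ne_top (by finiteness) h)
  have hle : ∑' x, ‖f x‖ ^ p ≤ C ^ p := by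
    rwa [← ENNReal.ofReal_pow hC, tsum_congr hreal,
      ← ENNReal.ofReal_tsum_of_nonneg (fun _ => by positivity) hsum,
      ENNReal.ofReal_le_ofReal_iff (by positivity)] at h
  refine ⟨hsum, ?_⟩
  rw [one_div]
  exact (Real.rpow_inv_le_iff_of_pos (tsum_nonneg fun _ => by positivity) hC (by positivity)).2
    (by rwa [Real.rpow_natCast])

section Anisotropic

variable {R M N : Type*} [CommRing R] [IsDomain R] [NeZero (2 : R)] [AddCommGroup M] [Module R M]
  [AddCommGroup N] [Module R N] [Module.IsTorsionFree R N] {Q : QuadraticMap R M N} {n : ℕ}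

theorem eq_zero_of_smul_mem_of_le_ker_polarBilin (hQ : Q.Anisotropic) {W : Submodule R M} {x : M}
    (hx : W ≤ (Q.polarBilin x).ker) {c : R} (hc : c ≠ 0) (hcx : c • x ∈ W) : x = 0 := by
  have h : (c * 2) • Q x = 0 := by simpa [mul_smul, two_smul] using hx hcx
  exact hQ x ((smul_eq_zero_iff_right (mul_ne_zero hc two_ne_zero)).1 h)

theorem linearIndependent_finCons_of_span_le_ker_polarBilin (hQ : Q.Anisotropic) {v : Fin n → M}
    (hv : LinearIndependent R v) {x : M} (hx : x ≠ 0)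
    (hxv : span R (Set.range v) ≤ (Q.polarBilin x).ker) :
    LinearIndependent R (Fin.cons x v : Fin (n + 1) → M) := by
  refine .finCons' x v hv fun c y hy hxy => ?_
  contrapose! hx with hc
  exact eq_zero_of_smul_mem_of_le_ker_polarBilin hQ hxv hc
    (eq_neg_of_add_eq_zero_left hxy ▸ neg_mem hy)

theorem eq_zero_of_rank_le_of_span_le_ker_polarBilin (hQ : Q.Anisotropic) {Λ : Submodule R M}
    (hΛ : Module.rank R Λ ≤ n) {v : Fin n → M} (hv : LinearIndependent R v) (hvΛ : ∀ i, v i ∈ Λ)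
    {x : M} (hxΛ : x ∈ Λ) (hxv : span R (Set.range v) ≤ (Q.polarBilin x).ker) : x = 0 := by
  by_contra hx
  have hmem : ∀ i, (Fin.cons x v : Fin (n + 1) → M) i ∈ Λ := Fin.cases hxΛ hvΛ
  have hindep : LinearIndependent R fun i => (⟨_, hmem i⟩ : Λ) :=
    .of_comp Λ.subtype (linearIndependent_finCons_of_span_le_ker_polarBilin hQ hv hx hxv)
  have hcard := hindep.cardinal_lift_le_rank.trans (Cardinal.lift_le.2 hΛ)
  rw [Cardinal.mk_fin, Cardinal.lift_natCast, Cardinal.lift_natCast, Nat.cast_le] at hcard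
  exact n.not_succ_le_self hcard

end Anisotropic

section BasisIndices

variable (R : Type*) {M ι : Type*} [CommRing R] [AddCommGroup M] [Module R M] (v : ι → M)

/-- The index set of a maximal linearly independent subfamily of `v`, chosen as a function of
`v`. -/
noncomputable def basisIndices : Set ι :=
  (exists_maximal_linearIndepOn R v).choose

theorem linearIndepOn_basisIndices : LinearIndepOn R v (basisIndices R v) :=
  (exists_maximal_linearIndepOn R v).choose_spec.1

theorem exists_smul_mem_span_basisIndices {i : ι} (hi : i ∉ basisIndices R v) :
    ∃ c : R, c ≠ 0 ∧ c • v i ∈ span R (v '' basisIndices R v) :=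
  (exists_maximal_linearIndepOn R v).choose_spec.2 i hi

end BasisIndices

section Endpoints

variable {M : Type*} [AddCommGroup M] {n : ℕ} {S : Set (Fin n)} {l l' : M}
  {κ κ' : Fin (n + 1) → M}

/-- The increments of the tuple `κ` from its base point `κ 0`. -/
def increments (κ : Fin (n + 1) → M) (i : Fin n) : M :=
  κ i.succ - κ 0

open scoped Classical in
/-- One endpoint of each edge `{κ i, κ i - l}`: the first one for `i = 0` and for `i = j.succ` with
`j ∈ S`, the second one otherwise. -/
noncomputable def endpoints (S : Set (Fin n)) (l : M) (κ : Fin (n + 1) → M) : Fin (n + 1) → M :=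
  Fin.cons (κ 0) (S.piecewise (fun j => κ j.succ) fun j => κ j.succ - l)

theorem endpoints_succ_of_mem {j : Fin n} (hj : j ∈ S) :
    endpoints S l κ j.succ = κ j.succ := by
  simp [endpoints, hj]

theorem endpoints_succ_of_notMem {j : Fin n} (hj : j ∉ S) :
    endpoints S l κ j.succ = κ j.succ - l := by
  simp [endpoints, hj]

theorem endpoints_injective : (endpoints S l).Injective := fun κ κ' h => by
  funext i
  have hi := congrFun h i
  cases i using Fin.cases with
  | zero => exact hi
  | succ j => by_cases hj : j ∈ S <;> simpa [endpoints, hj] using hi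

theorem increments_eq_of_endpoints_eq (h : endpoints S l κ = endpoints S l' κ') {j : Fin n}
    (hj : j ∈ S) : increments κ j = increments κ' j := by
  have h0 : κ 0 = κ' 0 := congrFun h 0
  have hj' := congrFun h j.succ
  rw [endpoints_succ_of_mem hj, endpoints_succ_of_mem hj] at hj'
  rw [increments, increments, h0, hj']

theorem increments_sub_eq_of_endpoints_eq (h : endpoints S l κ = endpoints S l' κ') {j : Fin n}
    (hj : j ∉ S) : increments κ j - increments κ' j = l - l' := by
  have h0 : κ 0 = κ' 0 := congrFun h 0
  have hj' := congrFun h j.succ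
  rw [endpoints_succ_of_notMem hj, endpoints_succ_of_notMem hj] at hj'
  rw [increments, increments, h0, sub_sub_sub_cancel_right, sub_eq_sub_iff_sub_eq_sub, hj']

theorem prod_endpoints_mul_prod_endpoints_neg {A : Type*} [CommMonoid A] (S : Set (Fin n)) (l : M)
    (κ : Fin (n + 1) → M) (g : Fin (n + 1) → M → A) :
    (∏ i, g i (endpoints S l κ i)) * ∏ i, g i (endpoints S (-l) (fun i => κ i - l) i) =
      ∏ i, g i (κ i) * g i (κ i - l) := by
  rw [← Finset.prod_mul_distrib]
  refine Finset.prod_congr rfl fun i _ => ?_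
  cases i using Fin.cases with
  | zero => rfl
  | succ j => by_cases hj : j ∈ S <;> simp [endpoints, hj, mul_comm]

end Endpoints

section ResonantTuples

variable {R M N : Type*} [CommRing R] [AddCommGroup M] [Module R M] [AddCommGroup N]
  {n : ℕ} {t t' : (M × N) × (Fin (n + 1) → M)}

/-- The edges `{κ i, κ i - l}` of `t = ((l, s), κ)` with their two endpoints exchanged. -/
def reverseEdges (t : (M × N) × (Fin (n + 1) → M)) : (M × N) × (Fin (n + 1) → M) :=
  ((-t.1.1, -t.1.2), fun i => t.2 i - t.1.1)

theorem reverseEdges_injective :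
    (reverseEdges : (M × N) × (Fin (n + 1) → M) → _).Injective :=
  Function.Involutive.injective fun t => by simp [reverseEdges]

variable (R) in
/-- The endpoints of the edges of `t = ((l, s), κ)` selected by a maximal independent subfamily of
the increments of `κ`, together with the record of which endpoints were selected. -/
noncomputable def endpointCode (t : (M × N) × (Fin (n + 1) → M)) :
    Set (Fin n) × (Fin (n + 1) → M) :=
  (basisIndices R (increments t.2), endpoints (basisIndices R (increments t.2)) t.1.1 t.2)

theorem prod_endpointCode_mul_prod_reverseEdges {A : Type*} [CommMonoid A]
    (t : (M × N) × (Fin (n + 1) → M)) (g : Fin (n + 1) → M → A) :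
    (∏ i, g i ((endpointCode R t).2 i)) * ∏ i, g i ((endpointCode R (reverseEdges t)).2 i) =
      ∏ i, g i (t.2 i) * g i (t.2 i - t.1.1) := by
  have hincr : increments (reverseEdges t).2 = increments t.2 := by
    funext i
    exact sub_sub_sub_cancel_right ..
  simp only [endpointCode, hincr]
  exact prod_endpoints_mul_prod_endpoints_neg _ t.1.1 t.2 g

variable [Module R N] {Q : QuadraticMap R M N} {Λ : Submodule R M}

/-- The tuples `((l, s), κ)` with `l` and `κ` in `Λ` for which every edge `{κ i, κ i - l}`
contributes to the space-time frequency `(l, s)`. -/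
def resonantTuples (Q : QuadraticMap R M N) (Λ : Submodule R M) (n : ℕ) :
    Set ((M × N) × (Fin (n + 1) → M)) :=
  {t | t.1.1 ∈ Λ ∧ (∀ i, t.2 i ∈ Λ) ∧ ∀ i, Q (t.2 i - t.1.1) - Q (t.2 i) = t.1.2}

theorem mapsTo_reverseEdges_resonantTuples :
    Set.MapsTo reverseEdges (resonantTuples Q Λ n) (resonantTuples Q Λ n) :=
  fun t ⟨hl, hκ, hs⟩ => ⟨neg_mem hl, fun i => sub_mem (hκ i) hl, fun i => by
    simp [reverseEdges, ← hs i]⟩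

theorem polar_increments_eq_zero (ht : t ∈ resonantTuples Q Λ n) (i : Fin n) :
    polar Q t.1.1 (increments t.2 i) = 0 := by
  have hpolar : ∀ j, polar Q t.1.1 (t.2 j) = Q t.1.1 - t.1.2 := fun j => by
    have hsub : Q (t.2 j - t.1.1) = Q (t.2 j) + Q t.1.1 - polar Q t.1.1 (t.2 j) := by
      rw [sub_eq_add_neg, QuadraticMap.map_add Q, QuadraticMap.map_neg, polar_neg_right, polar_comm,
        ← sub_eq_add_neg]
    rw [← ht.2.2 j, hsub]
    abel
  rw [increments, polar_sub_right, hpolar, hpolar, sub_self]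

theorem span_increments_le_ker_polarBilin (ht : t ∈ resonantTuples Q Λ n) (S : Set (Fin n)) :
    span R (increments t.2 '' S) ≤ (Q.polarBilin t.1.1).ker :=
  span_le.2 <| Set.image_subset_iff.2 fun i _ => polar_increments_eq_zero ht i

variable [IsDomain R] [NeZero (2 : R)] [Module.IsTorsionFree R N]

theorem fst_fst_eq_zero_of_basisIndices_eq_univ (hQ : Q.Anisotropic) (hΛ : Module.rank R Λ ≤ n)
    (ht : t ∈ resonantTuples Q Λ n) (hS : basisIndices R (increments t.2) = Set.univ) :
    t.1.1 = 0 := by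
  have hindep : LinearIndependent R (increments t.2) :=
    linearIndepOn_univ_iff.1 (hS ▸ linearIndepOn_basisIndices R _)
  exact eq_zero_of_rank_le_of_span_le_ker_polarBilin hQ hΛ hindep
    (fun i => sub_mem (ht.2.1 _) (ht.2.1 _)) ht.1
    (Set.image_univ ▸ span_increments_le_ker_polarBilin ht Set.univ)

theorem fst_fst_eq_of_endpointCode_eq (hQ : Q.Anisotropic) (hΛ : Module.rank R Λ ≤ n)
    (ht : t ∈ resonantTuples Q Λ n) (ht' : t' ∈ resonantTuples Q Λ n)
    (h : endpointCode R t = endpointCode R t') : t.1.1 = t'.1.1 := by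
  obtain ⟨hS, hP⟩ := Prod.ext_iff.1 h
  simp only [endpointCode] at hS hP
  rw [← hS] at hP
  set S := basisIndices R (increments t.2) with hSdef
  by_cases hSuniv : S = Set.univ
  · rw [fst_fst_eq_zero_of_basisIndices_eq_univ hQ hΛ ht hSuniv,
      fst_fst_eq_zero_of_basisIndices_eq_univ hQ hΛ ht' (hS ▸ hSuniv)]
  obtain ⟨j, hj⟩ := (Set.ne_univ_iff_exists_notMem S).1 hSuniv
  -- Up to scalars, both `j`-th increments lie in the span of the common basis increments; their
  -- difference is `l - l'`, which is orthogonal to that span.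
  obtain ⟨c, hc, hcj⟩ := exists_smul_mem_span_basisIndices R (increments t.2) hj
  obtain ⟨c', hc', hcj'⟩ := exists_smul_mem_span_basisIndices R (increments t'.2) (hS ▸ hj)
  have hW : increments t'.2 '' S = increments t.2 '' S :=
    Set.image_congr fun i hi => (increments_eq_of_endpoints_eq hP hi).symm
  rw [← hSdef] at hcj
  rw [← hS, hW] at hcj'
  have hmem : (c' * c) • (t.1.1 - t'.1.1) ∈ span R (increments t.2 '' S) := by
    rw [← increments_sub_eq_of_endpoints_eq hP hj, smul_sub, mul_smul, mul_comm, mul_smul]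
    exact sub_mem (smul_mem _ _ hcj) (smul_mem _ _ hcj')
  have hker : span R (increments t.2 '' S) ≤ (Q.polarBilin (t.1.1 - t'.1.1)).ker := fun w hw => by
    rw [LinearMap.mem_ker, map_sub, LinearMap.sub_apply,
      LinearMap.mem_ker.1 (span_increments_le_ker_polarBilin ht S hw),
      LinearMap.mem_ker.1 (span_increments_le_ker_polarBilin ht' S (hW ▸ hw)), sub_zero]
  exact sub_eq_zero.1 (eq_zero_of_smul_mem_of_le_ker_polarBilin hQ hker (mul_ne_zero hc' hc) hmem)

theorem injOn_endpointCode (hQ : Q.Anisotropic) (hΛ : Module.rank R Λ ≤ n) :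
    Set.InjOn (endpointCode R) (resonantTuples Q Λ n) := fun t ht t' ht' h => by
  have hl := fst_fst_eq_of_endpointCode_eq hQ hΛ ht ht' h
  obtain ⟨hS, hP⟩ := Prod.ext_iff.1 h
  simp only [endpointCode] at hS hP
  have hκ : t.2 = t'.2 := endpoints_injective (by rwa [← hS, ← hl] at hP)
  exact Prod.ext (Prod.ext hl (by rw [← ht.2.2 0, ← ht'.2.2 0, hl, hκ])) hκ

end ResonantTuples

section DispersiveCoef

variable {R M N 𝕜 : Type*} [DecidableEq N]

section Defs

variable [Sub M] [Sub N]

/-- The coefficient at `(l, s)` of `|e^{-itQ(D)}u|²`, where `a` are the Fourier coefficients of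
`u`; `bcoef` is the case of the Euclidean form `Q`. -/
noncomputable def dispersiveCoef [RCLike 𝕜] (Q : M → N) (a : M → 𝕜) (l : M) (s : N) : 𝕜 :=
  ∑' k, if Q (k - l) - Q k = s then a k * conj (a (k - l)) else 0

/-- The termwise majorant of `dispersiveCoef`, in terms of `g = |a|`. -/
noncomputable def resonantSum (Q : M → N) (g : M → ℝ≥0∞) (l : M) (s : N) : ℝ≥0∞ :=
  ∑' k, if Q (k - l) - Q k = s then g k * g (k - l) else 0

theorem enorm_dispersiveCoef_le [RCLike 𝕜] (Q : M → N) (a : M → 𝕜) (l : M) (s : N) :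
    ‖dispersiveCoef Q a l s‖ₑ ≤ resonantSum Q (‖a ·‖ₑ) l s := by
  refine enorm_tsum_le_tsum_enorm.trans (ENNReal.tsum_le_tsum fun k => ?_)
  split_ifs <;> simp [enorm_mul]

end Defs

variable [CommRing R] [AddCommGroup M] [Module R M] [AddCommGroup N] [Module R N]
  {n : ℕ} {Q : QuadraticMap R M N} {Λ : Submodule R M} {g : Fin (n + 1) → M → ℝ≥0∞}

theorem tsum_prod_resonantSum_eq_tsum_resonantTuples (hg : ∀ i, ∀ k ∉ Λ, g i k = 0) :
    ∑' ls : M × N, ∏ i, resonantSum Q (g i) ls.1 ls.2 =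
      ∑' t : resonantTuples Q Λ n, ∏ i, g i (t.1.2 i) * g i (t.1.2 i - t.1.1.1) := by
  set F : (M × N) × (Fin (n + 1) → M) → ℝ≥0∞ := fun t =>
    ∏ i, if Q (t.2 i - t.1.1) - Q (t.2 i) = t.1.2 then g i (t.2 i) * g i (t.2 i - t.1.1) else 0
  have hsupp : F.support ⊆ resonantTuples Q Λ n := fun t ht => by
    have hne := fun i => Finset.prod_ne_zero_iff.1 ht i (Finset.mem_univ i)
    simp only [ne_eq, ite_eq_right_iff, not_forall, mul_eq_zero, not_or] at hne
    have hΛ : ∀ i, t.2 i ∈ Λ := fun i => not_imp_comm.1 (hg i _) (hne i).2.1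
    have hΛ' : t.2 0 - t.1.1 ∈ Λ := not_imp_comm.1 (hg 0 _) (hne 0).2.2
    exact ⟨by simpa using sub_mem (hΛ 0) hΛ', hΛ, fun i => (hne i).1⟩
  calc ∑' ls : M × N, ∏ i, resonantSum Q (g i) ls.1 ls.2
      = ∑' t, F t := by
        simp only [resonantSum, prod_tsum_eq_tsum_prod, ENNReal.tsum_prod', F]
    _ = ∑' t : resonantTuples Q Λ n, F t := (tsum_subtype_eq_of_support_subset hsupp).symm
    _ = _ := tsum_congr fun t => Finset.prod_congr rfl fun i _ => if_pos (t.2.2.2 i)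

variable [IsDomain R] [NeZero (2 : R)] [Module.IsTorsionFree R N]

theorem tsum_prod_resonantSum_le (hQ : Q.Anisotropic) (hΛ : Module.rank R Λ ≤ n)
    (hg : ∀ i, ∀ k ∉ Λ, g i k = 0) :
    ∑' ls : M × N, ∏ i, resonantSum Q (g i) ls.1 ls.2 ≤ 2 ^ n * ∏ i, ∑' k, g i k ^ 2 := by
  set P : (M × N) × (Fin (n + 1) → M) → ℝ≥0∞ := fun t => ∏ i, g i ((endpointCode R t).2 i)
  have hcode := injOn_endpointCode (N := N) hQ hΛ
  have hcode_rev := hcode.comp reverseEdges_injective.injOn mapsTo_reverseEdges_resonantTuples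
  have hcard : (2 : ℝ≥0∞) ^ n = Fintype.card (Set (Fin n)) := by simp
  have hsq : ∑' t : resonantTuples Q Λ n, P t ^ 2 ≤ 2 ^ n * ∏ i, ∑' k, g i k ^ 2 :=
    hcard ▸ tsum_sq_prod_le_card_mul hcode.injective g
  have hsq_rev : ∑' t : resonantTuples Q Λ n, P (reverseEdges t) ^ 2 ≤
      2 ^ n * ∏ i, ∑' k, g i k ^ 2 :=
    hcard ▸ tsum_sq_prod_le_card_mul hcode_rev.injective g
  rw [tsum_prod_resonantSum_eq_tsum_resonantTuples hg]
  refine (ENNReal.mul_le_mul_iff_right two_ne_zero ENNReal.ofNat_ne_top).1 ?_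
  calc 2 * ∑' t : resonantTuples Q Λ n, ∏ i, g i (t.1.2 i) * g i (t.1.2 i - t.1.1.1)
      = ∑' t : resonantTuples Q Λ n, 2 * (P t * P (reverseEdges t)) := by
        simp only [P, prod_endpointCode_mul_prod_reverseEdges, ENNReal.tsum_mul_left]
    _ ≤ ∑' t : resonantTuples Q Λ n, (P t ^ 2 + P (reverseEdges t) ^ 2) :=
        ENNReal.tsum_le_tsum fun t => two_mul_mul_le_sq_add_sq _ _
    _ ≤ 2 * (2 ^ n * ∏ i, ∑' k, g i k ^ 2) := by
        rw [ENNReal.tsum_add, two_mul]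
        exact add_le_add hsq hsq_rev

theorem tsum_pow_tsum_mul_resonantSum_le {ι : Type*} (hQ : Q.Anisotropic)
    (hΛ : Module.rank R Λ ≤ n) (w : ι → ℝ≥0∞) {g : ι → M → ℝ≥0∞} (hg : ∀ i, ∀ k ∉ Λ, g i k = 0) :
    ∑' ls : M × N, (∑' i, w i * resonantSum Q (g i) ls.1 ls.2) ^ (n + 1) ≤
      2 ^ n * (∑' i, w i * ∑' k, g i k ^ 2) ^ (n + 1) := by
  have hpow : ∀ f : ι → ℝ≥0∞, (∑' i, f i) ^ (n + 1) = ∑' ν : Fin (n + 1) → ι, ∏ j, f (ν j) :=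
    fun f => by rw [← prod_tsum_eq_tsum_prod, Fin.prod_const]
  calc ∑' ls : M × N, (∑' i, w i * resonantSum Q (g i) ls.1 ls.2) ^ (n + 1)
      = ∑' ν : Fin (n + 1) → ι, (∏ j, w (ν j)) *
          ∑' ls : M × N, ∏ j, resonantSum Q (g (ν j)) ls.1 ls.2 := by
        simp only [hpow, Finset.prod_mul_distrib, ← ENNReal.tsum_mul_left]
        exact ENNReal.tsum_comm
    _ ≤ ∑' ν : Fin (n + 1) → ι, (∏ j, w (ν j)) * (2 ^ n * ∏ j, ∑' k, g (ν j) k ^ 2) := by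
        gcongr with ν
        exact tsum_prod_resonantSum_le hQ hΛ fun j => hg (ν j)
    _ = 2 ^ n * (∑' i, w i * ∑' k, g i k ^ 2) ^ (n + 1) := by
        simp only [hpow, Finset.prod_mul_distrib, mul_left_comm _ ((2 : ℝ≥0∞) ^ n),
          ENNReal.tsum_mul_left]

theorem tsum_enorm_tsum_mul_dispersiveCoef_pow_le [RCLike 𝕜] {ι : Type*} (hQ : Q.Anisotropic)
    (hΛ : Module.rank R Λ ≤ n) (c : ι → 𝕜) {a : ι → M → 𝕜} (ha : ∀ i, ∀ k ∉ Λ, a i k = 0) :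
    ∑' ls : M × N, ‖∑' i, c i * dispersiveCoef Q (a i) ls.1 ls.2‖ₑ ^ (n + 1) ≤
      2 ^ n * (∑' i, ‖c i‖ₑ * ∑' k, ‖a i k‖ₑ ^ 2) ^ (n + 1) := by
  refine le_trans ?_ (tsum_pow_tsum_mul_resonantSum_le hQ hΛ (‖c ·‖ₑ)
    (g := fun i k => ‖a i k‖ₑ) fun i k hk => by simp [ha i k hk])
  gcongr with ls
  refine enorm_tsum_le_tsum_enorm.trans (ENNReal.tsum_le_tsum fun i => ?_)
  rw [enorm_mul]
  gcongr
  exact enorm_dispersiveCoef_le ..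

theorem lp_norm_bcoef_density_matrix_le_general [RCLike 𝕜] {ι : Type*} (hQ : Q.Anisotropic)
    (hΛ : Module.rank R Λ ≤ n) (c : ι → 𝕜) {a : ι → M → 𝕜} (ha : ∀ i, ∀ k ∉ Λ, a i k = 0)
    (hsq : ∀ i, Summable fun k => ‖a i k‖ ^ 2)
    (hc : Summable fun i => ‖c i‖ * ∑' k, ‖a i k‖ ^ 2) :
    (Summable fun ls : M × N =>
        ‖∑' i, c i * dispersiveCoef Q (a i) ls.1 ls.2‖ ^ (n + 1)) ∧
      (∑' ls : M × N, ‖∑' i, c i * dispersiveCoef Q (a i) ls.1 ls.2‖ ^ (n + 1)) ^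
          ((1 : ℝ) / (n + 1)) ≤
        2 ^ ((n : ℝ) / (n + 1)) * ∑' i, ‖c i‖ * ∑' k, ‖a i k‖ ^ 2 := by
  have hmass : ENNReal.ofReal (∑' i, ‖c i‖ * ∑' k, ‖a i k‖ ^ 2) =
      ∑' i, ‖c i‖ₑ * ∑' k, ‖a i k‖ₑ ^ 2 := by
    rw [ENNReal.ofReal_tsum_of_nonneg (fun i => by positivity) hc]
    refine tsum_congr fun i => ?_
    rw [ENNReal.ofReal_mul (norm_nonneg _), ofReal_norm,
      ENNReal.ofReal_tsum_of_nonneg (fun k => by positivity) (hsq i)]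
    simp only [ENNReal.ofReal_pow (norm_nonneg _), ofReal_norm]
  have hconst : ENNReal.ofReal (2 ^ ((n : ℝ) / (n + 1))) ^ (n + 1) = 2 ^ n := by
    rw [← ENNReal.ofReal_pow (by positivity), ← Real.rpow_mul_natCast zero_le_two, Nat.cast_add_one,
      div_mul_cancel₀ _ (by positivity), Real.rpow_natCast, ENNReal.ofReal_pow zero_le_two,
      ENNReal.ofReal_ofNat]
  have h := tsum_enorm_tsum_mul_dispersiveCoef_pow_le hQ hΛ c ha
  rw [← hmass, ← hconst, ← mul_pow, ← ENNReal.ofReal_mul (by positivity)] at h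
  exact_mod_cast summable_and_rpow_tsum_le_of_tsum_enorm_pow_le n.succ_ne_zero (by positivity) h

end DispersiveCoef

/-- The form `|k|²` on `ℤ^d`, whose `dispersiveCoef` is `bcoef`. -/
abbrev euclideanForm (d : ℕ) : QuadraticMap ℤ (Fin d → ℤ) ℤ :=
  LinearMap.BilinMap.toQuadraticMap (dotProductBilin ℤ ℤ)

theorem anisotropic_euclideanForm (d : ℕ) : (euclideanForm d).Anisotropic :=
  fun _ hk => dotProduct_self_eq_zero.1 hk

theorem dispersiveCoef_euclideanForm {d : ℕ} (a : (Fin d → ℤ) → ℂ) :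
    dispersiveCoef (euclideanForm d) a = bcoef a := rfl

/-- Theorem 3 (density-matrix version): if `ρ = Σ λ_n u_n ⊗ u_n*` with the `u_n` of unit
norm and Fourier support in a rank-`δ` submodule `Λ ⊆ ℤ^d`, then
`‖b_ρ‖_{ℓ^{δ+1}(ℤ^{d+1})} ≤ 2^{δ/(δ+1)} Σ_n λ_n`. -/
theorem lp_norm_bcoef_density_matrix_le (d δ : ℕ) (hd : 1 ≤ d) (hδ : 1 ≤ δ)
    (Λ : Submodule ℤ (Fin d → ℤ)) (hrk : Module.finrank ℤ Λ = δ)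
    (lam : ℕ → ℝ) (hlam : ∀ n, 0 ≤ lam n) (hlamsum : Summable lam)
    (a : ℕ → (Fin d → ℤ) → ℂ)
    (hsupp : ∀ n, ∀ k : Fin d → ℤ, k ∉ Λ → a n k = 0)
    (hsq : ∀ n, Summable fun k : Fin d → ℤ => ‖a n k‖ ^ 2)
    (hnorm : ∀ n, (∑' k : Fin d → ℤ, ‖a n k‖ ^ 2) = 1)
    (brho : (Fin d → ℤ) → ℤ → ℂ)
    (hbrho : ∀ (l : Fin d → ℤ) (s : ℤ),
      brho l s = ∑' n : ℕ, (lam n : ℂ) * bcoef (a n) l s) :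
    (Summable fun ls : (Fin d → ℤ) × ℤ => ‖brho ls.1 ls.2‖ ^ (δ + 1)) ∧
      (∑' ls : (Fin d → ℤ) × ℤ, ‖brho ls.1 ls.2‖ ^ (δ + 1)) ^ ((1 : ℝ) / (δ + 1)) ≤
        2 ^ ((δ : ℝ) / (δ + 1)) * ∑' n : ℕ, lam n := by
  simpa [hbrho, hnorm, abs_of_nonneg, hlam, dispersiveCoef_euclideanForm] using
    lp_norm_bcoef_density_matrix_le_general (anisotropic_euclideanForm d)
      (hrk ▸ Module.finrank_eq_rank ℤ Λ).ge (fun n => (lam n : ℂ)) hsupp hsq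
      (by simpa [hnorm, abs_of_nonneg, hlam] using hlamsum)
end
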